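/- Let N, T, M be positive integers and let r_1, …, r_N be nonnegative integers satisfying r_i ≤ T for every i and ∑_{i=1}^N r_i ≤ M·T. Then there exists an N×T matrix Q with entries in {0,1} whose i-th row sum equals r_i for every i and whose every column sum is at most M. -/

import Mathlib

/-- Among the first `M * T` naturals, each residue class modulo `T` occurs exactly `M` times. -/
theorem sum_range_mul_ite_mod_eq (M T : ℕ) (t : Fin T) :
    ∑ k ∈ Finset.range (M * T), (if k % T = t then 1 else 0) = M := by
  induction M with
  | zero => simp
  | succ M ih =>
    rw [Nat.succ_mul, Finset.sum_range_add, ih]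
    have h : ∀ k ∈ Finset.range T,
        (if (M * T + k) % T = t then 1 else 0) = if k = t then 1 else 0 := by
      intro k hk
      rw [Nat.mul_add_mod', Nat.mod_eq_of_lt (Finset.mem_range.mp hk)]
    rw [Finset.sum_congr rfl h]
    simp

/-- At most one of `T` consecutive naturals lies in a given residue class modulo `T`. -/
theorem sum_ite_add_mod_eq_le_one {n T : ℕ} (hn : n ≤ T) (s t : ℕ) :
    ∑ j : Fin n, (if (s + j) % T = t then 1 else 0) ≤ 1 := by
  rw [← Finset.card_filter, Finset.card_le_one]
  intro a ha b hb
  simp only [Finset.mem_filter, Finset.mem_univ, true_and] at ha hb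
  have h : (a : ℕ) ≡ b [MOD T] := Nat.ModEq.add_left_cancel' s (ha.trans hb.symm)
  exact Fin.ext (h.eq_of_lt_of_lt (a.2.trans_le hn) (b.2.trans_le hn))

/-- Given target row weights `r i ≤ T` with `∑ i, r i ≤ M * T`,
there exists a binary N×T matrix whose `i`-th row sum is `r i` and whose every
column sum is at most `M`. -/
theorem exists_binary_matrix_with_row_sums_and_bounded_column_sums
    (N T M : ℕ) (hN : 0 < N) (hT : 0 < T) (hM : 0 < M)
    (r : Fin N → ℕ) (hr : ∀ i, r i ≤ T) (hsum : ∑ i : Fin N, r i ≤ M * T) :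
    ∃ Q : Fin N → Fin T → ℕ,
      (∀ i t, Q i t = 0 ∨ Q i t = 1) ∧
      (∀ i : Fin N, ∑ t : Fin T, Q i t = r i) ∧
      (∀ t : Fin T, ∑ i : Fin N, Q i t ≤ M) := by
  -- Number all packets consecutively, row after row, and send packet `k` in slot `k % T`.
  refine ⟨fun i t => ∑ j : Fin (r i),
    if (finSigmaFinEquiv ⟨i, j⟩ : ℕ) % T = t then 1 else 0, fun i t => ?_, fun i => ?_,
    fun t => ?_⟩
  · simp only [finSigmaFinEquiv_apply]
    rw [← Nat.le_one_iff_eq_zero_or_eq_one]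
    exact sum_ite_add_mod_eq_le_one (hr i) (∑ l : Fin i, r (Fin.castLE i.2.le l)) t
  · rw [Finset.sum_comm]
    have h (k : ℕ) : ∑ t : Fin T, (if k % T = t then 1 else 0) = 1 := by
      rw [Fin.sum_univ_eq_sum_range (fun t => if k % T = t then 1 else 0)]
      simp [Nat.mod_lt k hT]
    simp [h]
  · rw [← Fintype.sum_sigma' (fun i (j : Fin (r i)) =>
        if (finSigmaFinEquiv ⟨i, j⟩ : ℕ) % T = t then 1 else 0),
      finSigmaFinEquiv.sum_comp (fun k : Fin (∑ i, r i) => if (k : ℕ) % T = t then 1 else 0),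
      Fin.sum_univ_eq_sum_range (fun k => if k % T = t then 1 else 0)]
    calc _ ≤ ∑ k ∈ Finset.range (M * T), (if k % T = t then 1 else 0) :=
          Finset.sum_le_sum_of_subset (Finset.range_subset_range.mpr hsum)
      _ = M := sum_range_mul_ite_mod_eq M T t
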